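/- arXiv:1005.1902 — 4 statements merged into one kernel-verified Lean document; each statement's English description precedes it below -/
import Mathlib

section
/- Let λ ≥ 2 and let θ ∈ S¹ be λ-renormalizable, with λ-shrinking sequence ⟨g_i⟩ and sign sequence ⟨s_i⟩. If v ∈ S¹ satisfies ρ_λ(g_i)v ∈ cl(Q_{s_i}) for every i ≥ 0, then v = θ. -/
noncomputable section

abbrev F2 := FreeGroup Bool

def gh : F2 := FreeGroup.of true
def gv : F2 := FreeGroup.of false

def hmat (l : ℝ) : Matrix.SpecialLinearGroup (Fin 2) ℝ :=
  ⟨!![1, l; 0, 1], by norm_num [Matrix.det_fin_two_of]⟩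

def vmat (l : ℝ) : Matrix.SpecialLinearGroup (Fin 2) ℝ :=
  ⟨!![1, 0; l, 1], by norm_num [Matrix.det_fin_two_of]⟩

def rho (l : ℝ) : F2 →* Matrix.SpecialLinearGroup (Fin 2) ℝ :=
  FreeGroup.lift fun b => if b then hmat l else vmat l

def act (l : ℝ) (g : F2) (x : Fin 2 → ℝ) : Fin 2 → ℝ :=
  (rho l g).val.mulVec x

def nrm (x : Fin 2 → ℝ) : ℝ := Real.sqrt (x 0 ^ 2 + x 1 ^ 2)

def Circ : Set (Fin 2 → ℝ) := {x | nrm x = 1}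

def gens : Set F2 := {gh, gv, gh⁻¹, gv⁻¹}

def ShrinkSet (l : ℝ) (g : F2) : Set (Fin 2 → ℝ) :=
  {x | x ∈ Circ ∧ nrm (act l g x) < 1}

def ExpSet (l : ℝ) (g : F2) : Set (Fin 2 → ℝ) :=
  {x | x ∈ Circ ∧ 1 < nrm (act l g x)}

def IsGeodesicRay (g : ℕ → F2) : Prop :=
  g 0 = 1 ∧ (∀ n, g (n + 1) * (g n)⁻¹ ∈ gens) ∧ ∀ n, g (n + 2) * (g n)⁻¹ ≠ 1

def IsGeodesicSegment (g : ℕ → F2) (N : ℕ) : Prop :=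
  g 0 = 1 ∧ (∀ n, n + 1 ≤ N → g (n + 1) * (g n)⁻¹ ∈ gens) ∧
    ∀ n, n + 2 ≤ N → g (n + 2) * (g n)⁻¹ ≠ 1

def IsShrinkingSeq (l : ℝ) (g : ℕ → F2) (θ : Fin 2 → ℝ) : Prop :=
  ∀ ε : ℝ, 0 < ε → ∃ i : ℕ, nrm (act l (g i) θ) < ε

def Shrinkable (l : ℝ) (θ : Fin 2 → ℝ) : Prop :=
  ∀ ε : ℝ, 0 < ε → ∃ g : F2, nrm (act l g θ) < ε

def Renormalizable (l : ℝ) (θ : Fin 2 → ℝ) : Prop :=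
  Shrinkable l θ ∧ ∀ k : F2, ∀ c : ℝ, act l (k * (gh * gv⁻¹) * k⁻¹) θ ≠ c • θ

abbrev SP := Bool × Bool

def Quad (s : SP) : Set (Fin 2 → ℝ) :=
  {x | (if s.1 then 0 < x 0 else x 0 < 0) ∧ (if s.2 then 0 < x 1 else x 1 < 0)}

def letterSigma : Bool × Bool → SP → SP
  | (true, true), s => (s.2, s.2)
  | (false, true), s => (s.1, s.1)
  | (true, false), s => (!s.2, s.2)
  | (false, false), s => (s.1, !s.1)

def SigmaAct (g : F2) : SP → SP :=
  (FreeGroup.toWord g).foldr (fun w acc => letterSigma w ∘ acc) id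

def gammaAut : F2 →* F2 := FreeGroup.lift fun b => if b then gv⁻¹ else gh⁻¹

def rPerm (s : SP) : SP := (!s.2, s.1)

def rPermInv (s : SP) : SP := (s.2, !s.1)

def shiftRay (g : ℕ → F2) : ℕ → F2 := fun n => g (n + 1) * (g 1)⁻¹

def TailEquiv (g g' : ℕ → F2) : Prop :=
  ∃ m n : ℕ, shiftRay^[m] g = shiftRay^[n] g'

def seqPow (a : F2) : ℕ → F2 := fun n => a ^ n

def seqPer (a b : F2) : ℕ → F2 := fun n =>
  if n % 2 = 0 then (b * a) ^ (n / 2) else a * (b * a) ^ (n / 2)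

def Cond1 (g : ℕ → F2) : Prop :=
  ¬ TailEquiv g (seqPow gh) ∧ ¬ TailEquiv g (seqPow gh⁻¹) ∧
    ¬ TailEquiv g (seqPow gv) ∧ ¬ TailEquiv g (seqPow gv⁻¹)

def Cond2 (g : ℕ → F2) : Prop :=
  ¬ TailEquiv g (seqPer gh gv⁻¹) ∧ ¬ TailEquiv g (seqPer gh⁻¹ gv)

def adjSum {V : Type} (G : SimpleGraph V) (f : V → ℝ) (v : V) : ℝ :=
  ∑ᶠ w ∈ G.neighborSet v, f w

def BoundedValance {V : Type} (G : SimpleGraph V) : Prop :=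
  ∃ D : ℕ, ∀ v, (G.neighborSet v).Finite ∧ (G.neighborSet v).ncard ≤ D

def BipartWith {V : Type} (G : SimpleGraph V) (A : Set V) : Prop :=
  ∀ v w, G.Adj v w → (v ∈ A ↔ w ∉ A)

def Hop {V : Type} (G : SimpleGraph V) (A : Set V) (k : ℤ) (f : V → ℝ) : V → ℝ :=
  fun v => f v + (k : ℝ) * Set.indicator A (adjSum G f) v

def Vop {V : Type} (G : SimpleGraph V) (A : Set V) (k : ℤ) (f : V → ℝ) : V → ℝ :=
  fun v => f v + (k : ℝ) * Set.indicator Aᶜ (adjSum G f) v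

def QuadV {V : Type} (A : Set V) (s : SP) : Set (V → ℝ) :=
  {f | (∀ v ∈ A, f v = 0 ∨ (if s.1 then 0 < f v else f v < 0)) ∧
       ∀ v, v ∉ A → f v = 0 ∨ (if s.2 then 0 < f v else f v < 0)}

def valance {V : Type} (G : SimpleGraph V) (v : V) : ℕ := (G.neighborSet v).ncard

def evec {V : Type} (v : V) : V → ℝ := Set.indicator {v} 1

def InSpoke {V : Type} (G : SimpleGraph V) (x : V) : Prop :=
  ∃ k : ℕ, 2 ≤ k ∧ ∃ c : ℕ → V,
    (∀ i j, 1 ≤ i → i ≤ k → 1 ≤ j → j ≤ k → c i = c j → i = j) ∧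
    valance G (c 1) = 1 ∧
    (∀ i, 2 ≤ i → i ≤ k - 1 →
      valance G (c i) = 2 ∧ G.Adj (c i) (c (i - 1)) ∧ G.Adj (c i) (c (i + 1))) ∧
    ∃ i, 1 ≤ i ∧ i ≤ k ∧ x = c i

/-!
Each letter of the geodesic ray acts by a shear of one coordinate. Since `2 ≤ l`, once a shear makes
its coordinate both no smaller and strictly dominant, so do all later ones, and norms no longer
decrease. Along the shrinking sequence of `x` this never happens, so every step contracts a
coordinate of `x`: the coordinate either changes sign or moves towards zero on its own side. The
vector `w` follows `x` from quadrant to quadrant, so it undergoes the same kind of step.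

The form `p² + q² - l |pq|` is preserved by sign-changing steps; in the other steps its value before
the step bounds the squared norm after it. If all steps from some point on are sign-changing, the
form is constant along the tail of the orbit of `x`, hence zero, and `x` is an eigenvector of a
conjugate of `hv⁻¹`. Otherwise the orbit of `w` is bounded at infinitely many times, while that
of `x` tends to zero; as the determinant of the two vectors is preserved, it is zero.
-/

open Filter Topology

/-- The determinant of the matrix with columns `x` and `w`. -/
def wedge (x w : Fin 2 → ℝ) : ℝ := x 0 * w 1 - x 1 * w 0

/-- The form `p² + q² - l |pq|`. Its zeros are eigenvectors of `hv⁻¹` where `0 ≤ pq`, and of the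
conjugate `v⁻¹h` where `pq ≤ 0`. -/
def coneForm (l : ℝ) (x : Fin 2 → ℝ) : ℝ := nrm x ^ 2 - l * |x 0 * x 1|

/-- The shear adding `c` times the other coordinate to the coordinate `j`. The other coordinate
is `j.rev`, which lets one argument serve for horizontal and vertical shears. -/
def shear (c : ℝ) (j : Fin 2) (x : Fin 2 → ℝ) : Fin 2 → ℝ :=
  Function.update x j (x j + c * x j.rev)

/-- The shear does not shrink the coordinate `j` and makes it the strictly dominant one: the
condition which, for shears of strength at least `2`, is inherited by the next shear. -/
def IsExpanding (c : ℝ) (j : Fin 2) (x : Fin 2 → ℝ) : Prop :=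
  |x j.rev| < |shear c j x j| ∧ |x j| ≤ |shear c j x j|

/-- `x` lies in an open quadrant whose closure contains `w`. -/
def SameQuadrant (x w : Fin 2 → ℝ) : Prop := ∀ i, x i ≠ 0 ∧ 0 ≤ x i * w i

/-- `X` is obtained from `X 0` by applying successively the shears of parameters `c n`, `j n`. -/
def IsShearOrbit (c : ℕ → ℝ) (j : ℕ → Fin 2) (X : ℕ → Fin 2 → ℝ) : Prop :=
  ∀ n, X (n + 1) = shear (c n) (j n) (X n)

/-- The generator of `F2` acting by a shear of the coordinate `j`. -/
def gen (j : Fin 2) : F2 := ![gh, gv] j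

theorem exists_ge_lt_of_forall_exists_lt {u : ℕ → ℝ} (hpos : ∀ n, 0 < u n)
    (hu : ∀ ε, 0 < ε → ∃ n, u n < ε) (N : ℕ) {ε : ℝ} (hε : 0 < ε) : ∃ n ≥ N, u n < ε := by
  induction N generalizing ε with
  | zero => simpa using hu ε hε
  | succ N ih =>
    obtain ⟨n, hNn, hn⟩ := ih (lt_min hε (hpos N))
    have hne : N ≠ n := fun h => (hn.trans_le (min_le_right _ _)).ne (by rw [h])
    exact ⟨n, lt_of_le_of_ne hNn hne, hn.trans_le (min_le_left _ _)⟩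

theorem tendsto_zero_of_antitone {u : ℕ → ℝ} (hanti : Antitone u) (hnonneg : ∀ n, 0 ≤ u n)
    (hu : ∀ ε, 0 < ε → ∃ n, u n < ε) : Tendsto u atTop (𝓝 0) := by
  refine tendsto_order.2 ⟨fun a ha => .of_forall fun n => ha.trans_le (hnonneg n), fun ε hε => ?_⟩
  obtain ⟨N, hN⟩ := hu ε hε
  filter_upwards [eventually_ge_atTop N] with n hn using (hanti hn).trans_lt hN

theorem mul_nonpos_of_mul_neg {a b a' b' : ℝ} (hab : a * b < 0) (ha : 0 ≤ a * a')
    (hb : 0 ≤ b * b') : a' * b' ≤ 0 := by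
  have h : 0 ≤ (a * b) * (a' * b') := by
    rw [mul_mul_mul_comm]
    exact mul_nonneg ha hb
  exact nonpos_of_mul_nonneg_right h hab

/-! ### Norm, determinant and cone form -/

theorem nrm_nonneg (x : Fin 2 → ℝ) : 0 ≤ nrm x := Real.sqrt_nonneg _

theorem nrm_sq (x : Fin 2 → ℝ) (j : Fin 2) : nrm x ^ 2 = x j ^ 2 + x j.rev ^ 2 := by
  rw [nrm, Real.sq_sqrt (by positivity)]
  fin_cases j
  · rfl
  · exact add_comm _ _

theorem nrm_pos {x : Fin 2 → ℝ} {i : Fin 2} (hi : x i ≠ 0) : 0 < nrm x := by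
  refine (nrm_nonneg x).lt_of_ne' fun h => ?_
  have hsq := nrm_sq x i
  rw [h] at hsq
  nlinarith [sq_pos_of_ne_zero hi, sq_nonneg (x i.rev)]

theorem abs_wedge_le (x w : Fin 2 → ℝ) : |wedge x w| ≤ nrm x * nrm w := by
  refine abs_le_of_sq_le_sq ?_ (mul_nonneg (nrm_nonneg x) (nrm_nonneg w))
  rw [mul_pow, nrm_sq x 0, nrm_sq w 0]
  change _ ≤ (x 0 ^ 2 + x 1 ^ 2) * (w 0 ^ 2 + w 1 ^ 2)
  have lagrange : (x 0 ^ 2 + x 1 ^ 2) * (w 0 ^ 2 + w 1 ^ 2) =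
      wedge x w ^ 2 + (x 0 * w 0 + x 1 * w 1) ^ 2 := by
    unfold wedge
    ring
  rw [lagrange]
  exact le_add_of_nonneg_right (sq_nonneg _)

theorem exists_eq_smul_of_wedge_eq_zero {x w : Fin 2 → ℝ} (hx : x ≠ 0) (h : wedge x w = 0) :
    ∃ a : ℝ, w = a • x := by
  unfold wedge at h
  obtain ⟨i, hi⟩ := Function.ne_iff.1 hx
  rw [Pi.zero_apply] at hi
  refine ⟨w i / x i, funext fun k => ?_⟩
  rw [Pi.smul_apply, smul_eq_mul, div_mul_eq_mul_div, eq_div_iff hi]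
  fin_cases i <;> fin_cases k <;> simp only [Fin.zero_eta, Fin.mk_one] <;> linarith

theorem coneForm_eq (l : ℝ) (x : Fin 2 → ℝ) (j : Fin 2) :
    coneForm l x = |x j| ^ 2 + |x j.rev| ^ 2 - l * (|x j| * |x j.rev|) := by
  rw [coneForm, nrm_sq x j, sq_abs, sq_abs, abs_mul]
  fin_cases j
  · rfl
  · exact congrArg _ (congrArg _ (mul_comm _ _))

theorem coneForm_le_nrm_sq {l : ℝ} (hl : 0 ≤ l) (x : Fin 2 → ℝ) : coneForm l x ≤ nrm x ^ 2 :=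
  sub_le_self _ (by positivity)

theorem abs_coneForm_le {l : ℝ} (hl : 0 ≤ l) (x : Fin 2 → ℝ) :
    |coneForm l x| ≤ (1 + l) * nrm x ^ 2 := by
  have hprod : |x 0 * x 1| ≤ nrm x ^ 2 := by
    rw [nrm_sq x 0, abs_mul, ← sq_abs (x 0), ← sq_abs (x (Fin.rev 0))]
    change |x 0| * |x 1| ≤ |x 0| ^ 2 + |x 1| ^ 2
    nlinarith [sq_nonneg (|x 0| - |x 1|), abs_nonneg (x 0), abs_nonneg (x 1)]
  calc |coneForm l x| ≤ |nrm x ^ 2| + |l * (|x 0 * x 1|)| := abs_sub _ _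
    _ = nrm x ^ 2 + l * |x 0 * x 1| := by
      rw [abs_of_nonneg (by positivity), abs_of_nonneg (by positivity)]
    _ ≤ (1 + l) * nrm x ^ 2 := by nlinarith

theorem eq_of_mem_circ_of_sameQuadrant {x w : Fin 2 → ℝ} (hx : x ∈ Circ) (hw : w ∈ Circ)
    (hxw : SameQuadrant x w) (h : wedge x w = 0) : w = x := by
  have hx1 : x 0 ^ 2 + x 1 ^ 2 = 1 := by simpa [Circ, nrm] using hx
  have hw1 : w 0 ^ 2 + w 1 ^ 2 = 1 := by simpa [Circ, nrm] using hw
  have hdot_nonneg : 0 ≤ x 0 * w 0 + x 1 * w 1 := add_nonneg (hxw 0).2 (hxw 1).2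
  have hdot_sq : (x 0 * w 0 + x 1 * w 1) ^ 2 = 1 := by
    unfold wedge at h
    linear_combination (w 0 ^ 2 + w 1 ^ 2) * hx1 + hw1 - (x 0 * w 1 - x 1 * w 0) * h
  have hdot : x 0 * w 0 + x 1 * w 1 = 1 :=
    (pow_eq_one_iff_of_nonneg hdot_nonneg two_ne_zero).1 hdot_sq
  have hdist : (w 0 - x 0) ^ 2 + (w 1 - x 1) ^ 2 = 0 := by
    linear_combination hx1 + hw1 - 2 * hdot
  obtain ⟨h0, h1⟩ := (add_eq_zero_iff_of_nonneg (sq_nonneg _) (sq_nonneg _)).1 hdist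
  rw [sq_eq_zero_iff, sub_eq_zero] at h0 h1
  ext i
  fin_cases i
  · exact h0
  · exact h1

/-! ### A single shear -/

section Shear

variable {c c' : ℝ} {j j' : Fin 2} {x w : Fin 2 → ℝ}

theorem fin_two_rev_ne (j : Fin 2) : j.rev ≠ j := by
  revert j
  decide

theorem fin_two_eq_rev_of_ne (h : j ≠ j') : j' = j.rev := by
  revert j j'
  decide

theorem shear_apply_self (c : ℝ) (j : Fin 2) (x : Fin 2 → ℝ) :
    shear c j x j = x j + c * x j.rev :=
  Function.update_self ..

theorem shear_apply_rev (c : ℝ) (j : Fin 2) (x : Fin 2 → ℝ) : shear c j x j.rev = x j.rev :=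
  Function.update_of_ne (fin_two_rev_ne j) ..

theorem shear_zero (c : ℝ) (x : Fin 2 → ℝ) : shear c 0 x = ![x 0 + c * x 1, x 1] := by
  ext i
  fin_cases i <;> simp [shear]

theorem shear_one (c : ℝ) (x : Fin 2 → ℝ) : shear c 1 x = ![x 0, x 1 + c * x 0] := by
  ext i
  fin_cases i <;> simp [shear]

theorem shear_shear_neg (c : ℝ) (j : Fin 2) (x : Fin 2 → ℝ) :
    shear c j (shear (-c) j x) = x := by
  rw [shear, shear_apply_rev, shear_apply_self, neg_mul, neg_add_cancel_right]
  unfold shear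
  rw [Function.update_idem, Function.update_eq_self]

theorem wedge_shear (c : ℝ) (j : Fin 2) (x w : Fin 2 → ℝ) :
    wedge (shear c j x) (shear c j w) = wedge x w := by
  fin_cases j
  · simp only [Fin.zero_eta, wedge, shear_zero, Matrix.cons_val_zero, Matrix.cons_val_one]
    ring
  · simp only [Fin.mk_one, wedge, shear_one, Matrix.cons_val_zero, Matrix.cons_val_one]
    ring

theorem nrm_shear_le_iff : nrm (shear c j x) ≤ nrm x ↔ |shear c j x j| ≤ |x j| := by
  rw [← sq_le_sq₀ (nrm_nonneg _) (nrm_nonneg _), nrm_sq _ j, nrm_sq _ j, shear_apply_rev,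
    add_le_add_iff_right, sq_le_sq]

theorem le_nrm_shear_iff : nrm x ≤ nrm (shear c j x) ↔ |x j| ≤ |shear c j x j| := by
  rw [← sq_le_sq₀ (nrm_nonneg _) (nrm_nonneg _), nrm_sq _ j, nrm_sq _ j, shear_apply_rev,
    add_le_add_iff_right, sq_le_sq]

theorem two_mul_abs_le_abs_add_abs_shear (hc : 2 ≤ |c|) :
    2 * |x j.rev| ≤ |x j| + |shear c j x j| :=
  calc 2 * |x j.rev| ≤ |c| * |x j.rev| := by gcongr
    _ = |shear c j x j - x j| := by rw [shear_apply_self, add_sub_cancel_left, abs_mul]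
    _ ≤ |x j| + |shear c j x j| := by rw [add_comm]; exact abs_sub _ _

theorem IsExpanding.shear_self (h : IsExpanding c j x) : IsExpanding c j (shear c j x) := by
  have midpoint : 2 * shear c j x j = x j + shear c j (shear c j x) j := by
    rw [shear_apply_self c j (shear c j x), shear_apply_rev, shear_apply_self]
    ring
  have hle : |shear c j x j| ≤ |shear c j (shear c j x) j| := by
    have habs := abs_add_le (x j) (shear c j (shear c j x) j)
    rw [← midpoint, abs_mul, abs_two] at habs
    linarith [h.2]
  refine ⟨?_, hle⟩
  rw [shear_apply_rev]
  exact h.1.trans_le hle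

theorem IsExpanding.shear_rev (hc' : 2 ≤ |c'|) (h : IsExpanding c j x) :
    IsExpanding c' j.rev (shear c j x) := by
  have hgrow := two_mul_abs_le_abs_add_abs_shear (x := shear c j x) (j := j.rev) hc'
  rw [Fin.rev_rev, shear_apply_rev] at hgrow
  unfold IsExpanding
  rw [Fin.rev_rev, shear_apply_rev]
  constructor <;> linarith [h.1]

theorem IsExpanding.next (hc' : 2 ≤ |c'|) (hred : j = j' → c = c') (h : IsExpanding c j x) :
    IsExpanding c' j' (shear c j x) := by
  by_cases hj : j = j'
  · obtain rfl := hred hj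
    obtain rfl := hj
    exact h.shear_self
  · obtain rfl := fin_two_eq_rev_of_ne hj
    exact h.shear_rev hc'

theorem abs_shear_le_of_not_isExpanding (hc : 2 ≤ |c|) (h : ¬ IsExpanding c j x) :
    |shear c j x j| ≤ |x j| := by
  by_contra! hlt
  have hdom : |shear c j x j| ≤ |x j.rev| := not_lt.1 fun hrev => h ⟨hrev, hlt.le⟩
  linarith [two_mul_abs_le_abs_add_abs_shear (x := x) (j := j) hc]

theorem coneForm_shear_eq (h : x j * shear c j x j ≤ 0) :
    coneForm |c| (shear c j x) = coneForm |c| x := by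
  have habs : |c| * |x j.rev| = |shear c j x j| + |x j| := by
    rw [← abs_mul, show c * x j.rev = shear c j x j - x j by rw [shear_apply_self]; ring]
    rcases mul_nonpos_iff.1 h with ⟨hx, hx'⟩ | ⟨hx, hx'⟩
    · rw [abs_of_nonneg hx, abs_of_nonpos hx', abs_of_nonpos (by linarith)]
      ring
    · rw [abs_of_nonpos hx, abs_of_nonneg hx', abs_of_nonneg (by linarith)]
      ring
  rw [coneForm_eq _ _ j, coneForm_eq _ _ j, shear_apply_rev]
  linear_combination (|x j| - |shear c j x j|) * habs

theorem nrm_shear_sq_le_coneForm (h : shear c j x j * (c * x j.rev) ≤ 0) :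
    nrm (shear c j x) ^ 2 ≤ coneForm |c| x := by
  have habs : |x j| = |shear c j x j| + |c| * |x j.rev| := by
    rw [← abs_mul, show x j = shear c j x j - c * x j.rev by rw [shear_apply_self]; ring]
    rcases mul_nonpos_iff.1 h with ⟨hx', hc⟩ | ⟨hx', hc⟩
    · rw [abs_of_nonneg hx', abs_of_nonpos hc, abs_of_nonneg (by linarith)]
      ring
    · rw [abs_of_nonpos hx', abs_of_nonneg hc, abs_of_nonpos (by linarith)]
      ring
  have hform : coneForm |c| x =
      nrm (shear c j x) ^ 2 + |c| * (|shear c j x j| * |x j.rev|) := by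
    rw [coneForm_eq _ _ j, habs, nrm_sq _ j, shear_apply_rev, ← sq_abs (shear c j x j),
      ← sq_abs (x j.rev)]
    ring
  rw [hform]
  exact le_add_of_nonneg_right (by positivity)

theorem coneForm_shear_eq_of_sameQuadrant (hxw : SameQuadrant x w)
    (hxw' : SameQuadrant (shear c j x) (shear c j w)) (hcross : x j * shear c j x j < 0) :
    coneForm |c| (shear c j w) = coneForm |c| w :=
  coneForm_shear_eq (mul_nonpos_of_mul_neg hcross (hxw j).2 (hxw' j).2)

theorem nrm_shear_sq_le_coneForm_of_sameQuadrant (hc : 2 ≤ |c|) (hxw : SameQuadrant x w)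
    (hxw' : SameQuadrant (shear c j x) (shear c j w)) (hcontr : ¬ IsExpanding c j x)
    (hcross : ¬ x j * shear c j x j < 0) : nrm (shear c j w) ^ 2 ≤ coneForm |c| w := by
  have hle := abs_shear_le_of_not_isExpanding hc hcontr
  have hc0 : c ≠ 0 := abs_pos.1 (two_pos.trans_le hc)
  have hopposite : shear c j x j * (c * x j.rev) < 0 := by
    refine lt_of_le_of_ne ?_
      (mul_ne_zero (hxw' j).1 (mul_ne_zero hc0 (hxw j.rev).1))
    rw [show c * x j.rev = shear c j x j - x j by rw [shear_apply_self]; ring]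
    have hmul : |shear c j x j| * |shear c j x j| ≤ |x j| * |shear c j x j| := by gcongr
    rw [abs_mul_abs_self, ← abs_mul, abs_of_nonneg (not_lt.1 hcross)] at hmul
    linarith
  refine nrm_shear_sq_le_coneForm (mul_nonpos_of_mul_neg hopposite (hxw' j).2 ?_)
  rw [mul_mul_mul_comm]
  exact mul_nonneg (mul_self_nonneg c) (hxw j.rev).2

theorem coneForm_shear_le_of_sameQuadrant (hc : 2 ≤ |c|) (hxw : SameQuadrant x w)
    (hxw' : SameQuadrant (shear c j x) (shear c j w)) (hcontr : ¬ IsExpanding c j x) :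
    coneForm |c| (shear c j w) ≤ coneForm |c| w := by
  by_cases hcross : x j * shear c j x j < 0
  · exact (coneForm_shear_eq_of_sameQuadrant hxw hxw' hcross).le
  · exact (coneForm_le_nrm_sq (abs_nonneg c) _).trans
      (nrm_shear_sq_le_coneForm_of_sameQuadrant hc hxw hxw' hcontr hcross)

end Shear

/-! ### Orbits of reduced sequences of shears -/

namespace IsShearOrbit

variable {l : ℝ} {c : ℕ → ℝ} {j : ℕ → Fin 2} {X W : ℕ → Fin 2 → ℝ}

theorem wedge_eq (hX : IsShearOrbit c j X) (hW : IsShearOrbit c j W) (n : ℕ) :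
    wedge (X n) (W n) = wedge (X 0) (W 0) := by
  induction n with
  | zero => rfl
  | succ n ih => rw [hX n, hW n, wedge_shear, ih]

theorem isExpanding_of_le (hX : IsShearOrbit c j X) (hc : ∀ n, 2 ≤ |c n|)
    (hred : ∀ n, j n = j (n + 1) → c n = c (n + 1)) {m n : ℕ} (hmn : m ≤ n)
    (hm : IsExpanding (c m) (j m) (X m)) : IsExpanding (c n) (j n) (X n) := by
  induction n, hmn using Nat.le_induction with
  | base => exact hm
  | succ n _ ih =>
    rw [hX n]
    exact ih.next (hc (n + 1)) (hred n)

theorem nrm_le_of_isExpanding (hX : IsShearOrbit c j X) (hc : ∀ n, 2 ≤ |c n|)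
    (hred : ∀ n, j n = j (n + 1) → c n = c (n + 1)) {m n : ℕ} (hmn : m ≤ n)
    (hm : IsExpanding (c m) (j m) (X m)) : nrm (X m) ≤ nrm (X n) := by
  induction n, hmn using Nat.le_induction with
  | base => exact le_rfl
  | succ n hmn ih =>
    rw [hX n]
    exact ih.trans (le_nrm_shear_iff.2 (hX.isExpanding_of_le hc hred hmn hm).2)

theorem not_isExpanding (hX : IsShearOrbit c j X) (hc : ∀ n, 2 ≤ |c n|)
    (hred : ∀ n, j n = j (n + 1) → c n = c (n + 1)) (hpos : ∀ n, 0 < nrm (X n))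
    (hshrink : ∀ ε, 0 < ε → ∃ n, nrm (X n) < ε) (n : ℕ) :
    ¬ IsExpanding (c n) (j n) (X n) := fun hn => by
  obtain ⟨m, hnm, hlt⟩ := exists_ge_lt_of_forall_exists_lt hpos hshrink n (hpos n)
  exact hlt.not_ge (hX.nrm_le_of_isExpanding hc hred hnm hn)

theorem tendsto_nrm_zero (hX : IsShearOrbit c j X) (hc : ∀ n, 2 ≤ |c n|)
    (hcontr : ∀ n, ¬ IsExpanding (c n) (j n) (X n))
    (hshrink : ∀ ε, 0 < ε → ∃ n, nrm (X n) < ε) :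
    Tendsto (fun n => nrm (X n)) atTop (𝓝 0) := by
  refine tendsto_zero_of_antitone (antitone_nat_of_succ_le fun n => ?_)
    (fun n => nrm_nonneg (X n)) hshrink
  rw [hX n]
  exact nrm_shear_le_iff.2 (abs_shear_le_of_not_isExpanding (hc n) (hcontr n))

theorem frequently_not_crossing (hX : IsShearOrbit c j X) (hc : ∀ n, |c n| = l)
    (hzero : Tendsto (fun n => nrm (X n)) atTop (𝓝 0)) (hform : ∀ n, coneForm l (X n) ≠ 0) :
    ∃ᶠ n in atTop, ¬ X n (j n) * X (n + 1) (j n) < 0 := by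
  intro hcross
  simp only [not_not] at hcross
  obtain ⟨N, hN⟩ := eventually_atTop.1 hcross
  have hconst : ∀ n ≥ N, coneForm l (X n) = coneForm l (X N) := fun n hn => by
    induction n, hn using Nat.le_induction with
    | base => rfl
    | succ n hn ih =>
      have hneg := (hN n hn).le
      rw [hX n] at hneg
      rw [hX n, ← ih, ← hc n, coneForm_shear_eq hneg]
  have hl : 0 ≤ l := hc 0 ▸ abs_nonneg (c 0)
  have htendsto : Tendsto (fun n => coneForm l (X n)) atTop (𝓝 0) :=
    squeeze_zero_norm (fun n => abs_coneForm_le hl (X n))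
      (by simpa using (hzero.pow 2).const_mul (1 + l))
  exact hform N (tendsto_nhds_unique
    (tendsto_const_nhds.congr' (eventually_atTop.2 ⟨N, fun n hn => (hconst n hn).symm⟩)) htendsto)

theorem coneForm_le (hX : IsShearOrbit c j X) (hW : IsShearOrbit c j W) (hl : 2 ≤ l)
    (hc : ∀ n, |c n| = l) (hXW : ∀ n, SameQuadrant (X n) (W n))
    (hcontr : ∀ n, ¬ IsExpanding (c n) (j n) (X n)) (n : ℕ) :
    coneForm l (W n) ≤ coneForm l (W 0) := by
  refine antitone_nat_of_succ_le (f := fun n => coneForm l (W n)) (fun n => ?_) n.zero_le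
  have hquad := hXW (n + 1)
  rw [hX n, hW n] at hquad
  rw [hW n, ← hc n]
  exact coneForm_shear_le_of_sameQuadrant (by rwa [hc n]) (hXW n) hquad (hcontr n)

theorem frequently_nrm_sq_le (hX : IsShearOrbit c j X) (hW : IsShearOrbit c j W) (hl : 2 ≤ l)
    (hc : ∀ n, |c n| = l) (hXW : ∀ n, SameQuadrant (X n) (W n))
    (hcontr : ∀ n, ¬ IsExpanding (c n) (j n) (X n))
    (hcross : ∃ᶠ n in atTop, ¬ X n (j n) * X (n + 1) (j n) < 0) :
    ∃ᶠ n in atTop, nrm (W n) ^ 2 ≤ coneForm l (W 0) := by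
  refine (tendsto_add_atTop_nat 1).frequently (hcross.mono fun n hn => ?_)
  have hquad := hXW (n + 1)
  rw [hX n, hW n] at hquad
  rw [hX n] at hn
  refine le_trans ?_ (hX.coneForm_le hW hl hc hXW hcontr n)
  rw [hW n, ← hc n]
  exact nrm_shear_sq_le_coneForm_of_sameQuadrant (by rwa [hc n]) (hXW n) hquad (hcontr n) hn

theorem wedge_eq_zero_of_frequently_nrm_sq_le (hX : IsShearOrbit c j X) (hW : IsShearOrbit c j W)
    (hzero : Tendsto (fun n => nrm (X n)) atTop (𝓝 0)) {B : ℝ}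
    (hB : ∃ᶠ n in atTop, nrm (W n) ^ 2 ≤ B) : wedge (X 0) (W 0) = 0 := by
  refine abs_nonpos_iff.1 (ge_of_tendsto_of_frequently
    (by simpa using hzero.mul_const √B) (hB.mono fun n hn => ?_))
  calc |wedge (X 0) (W 0)| = |wedge (X n) (W n)| := by rw [hX.wedge_eq hW n]
    _ ≤ nrm (X n) * nrm (W n) := abs_wedge_le _ _
    _ ≤ nrm (X n) * √B := mul_le_mul_of_nonneg_left (Real.le_sqrt_of_sq_le hn) (nrm_nonneg _)

theorem wedge_eq_zero (hX : IsShearOrbit c j X) (hW : IsShearOrbit c j W) (hl : 2 ≤ l)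
    (hc : ∀ n, |c n| = l) (hred : ∀ n, j n = j (n + 1) → c n = c (n + 1))
    (hXW : ∀ n, SameQuadrant (X n) (W n)) (hshrink : ∀ ε, 0 < ε → ∃ n, nrm (X n) < ε)
    (hform : ∀ n, coneForm l (X n) ≠ 0) : wedge (X 0) (W 0) = 0 := by
  have hc2 : ∀ n, 2 ≤ |c n| := fun n => (hc n).symm ▸ hl
  have hcontr := hX.not_isExpanding hc2 hred (fun n => nrm_pos (hXW n 0).1) hshrink
  have hzero := hX.tendsto_nrm_zero hc2 hcontr hshrink
  have hcross := hX.frequently_not_crossing hc hzero hform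
  exact hX.wedge_eq_zero_of_frequently_nrm_sq_le hW hzero
    (hX.frequently_nrm_sq_le hW hl hc hXW hcontr hcross)

end IsShearOrbit

/-! ### The action of the free group -/

section Action

variable {l : ℝ} {x w : Fin 2 → ℝ}

theorem act_mul (l : ℝ) (a b : F2) (x : Fin 2 → ℝ) :
    act l (a * b) x = act l a (act l b x) := by
  rw [act, map_mul, Matrix.SpecialLinearGroup.coe_mul, ← Matrix.mulVec_mulVec, act, act]

theorem act_one (l : ℝ) (x : Fin 2 → ℝ) : act l 1 x = x := by
  simp [act]

theorem act_zero (l : ℝ) (a : F2) : act l a 0 = 0 := Matrix.mulVec_zero _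

theorem act_smul (l : ℝ) (a : F2) (t : ℝ) (x : Fin 2 → ℝ) :
    act l a (t • x) = t • act l a x :=
  Matrix.mulVec_smul _ _ _

theorem act_gen (l : ℝ) (j : Fin 2) (x : Fin 2 → ℝ) : act l (gen j) x = shear l j x := by
  ext i
  fin_cases j <;> fin_cases i <;>
    simp [act, rho, gen, gh, gv, hmat, vmat, shear, Matrix.mulVec, dotProduct, Fin.sum_univ_two,
      add_comm]

theorem act_gen_inv (l : ℝ) (j : Fin 2) (x : Fin 2 → ℝ) :
    act l (gen j)⁻¹ x = shear (-l) j x := by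
  have h : act l (gen j) (shear (-l) j x) = x := by rw [act_gen, shear_shear_neg]
  rw [← h, ← act_mul, inv_mul_cancel, act_one, h]

theorem act_gen_zpow (l : ℝ) (j : Fin 2) (e : ℤˣ) (x : Fin 2 → ℝ) :
    act l (gen j ^ (e : ℤ)) x = shear ((e : ℤ) * l) j x := by
  rcases Int.units_eq_one_or e with rfl | rfl
  · simpa using act_gen l j x
  · simpa using act_gen_inv l j x

theorem act_gh (l : ℝ) (x : Fin 2 → ℝ) : act l gh x = shear l 0 x :=
  act_gen l 0 x

theorem act_gv_inv (l : ℝ) (x : Fin 2 → ℝ) : act l gv⁻¹ x = shear (-l) 1 x :=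
  act_gen_inv l 1 x

theorem wedge_act_gh_mul_gv_inv (l : ℝ) (x : Fin 2 → ℝ) :
    wedge x (act l (gh * gv⁻¹) x) = -l * (nrm x ^ 2 - l * (x 0 * x 1)) := by
  simp only [wedge, act_mul, act_gh, act_gv_inv, shear_zero, shear_one, Matrix.cons_val_zero,
    Matrix.cons_val_one, nrm_sq x 0, Fin.rev_zero, Fin.reduceLast]
  ring

theorem wedge_act_gv_inv_mul_gh (l : ℝ) (x : Fin 2 → ℝ) :
    wedge x (act l (gv⁻¹ * gh) x) = -l * (nrm x ^ 2 + l * (x 0 * x 1)) := by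
  simp only [wedge, act_mul, act_gh, act_gv_inv, shear_zero, shear_one, Matrix.cons_val_zero,
    Matrix.cons_val_one, nrm_sq x 0, Fin.rev_zero, Fin.reduceLast]
  ring

theorem Renormalizable.ne_zero (hx : Renormalizable l x) : x ≠ 0 := by
  rintro rfl
  exact hx.2 1 0 (by rw [act_zero, smul_zero])

theorem Renormalizable.map_act (hx : Renormalizable l x) (k : F2) :
    Renormalizable l (act l k x) := by
  refine ⟨fun ε hε => ?_, fun m t hm => hx.2 (k⁻¹ * m) t ?_⟩
  · obtain ⟨a, ha⟩ := hx.1 ε hε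
    exact ⟨a * k⁻¹, by rwa [← act_mul, inv_mul_cancel_right]⟩
  · have h := congrArg (act l k⁻¹) hm
    rw [act_smul, ← act_mul, ← act_mul, ← act_mul, inv_mul_cancel, act_one] at h
    convert h using 2
    group

theorem Renormalizable.wedge_act_ne_zero (hx : Renormalizable l x) (k : F2) :
    wedge x (act l (k * (gh * gv⁻¹) * k⁻¹) x) ≠ 0 := fun h =>
  have ⟨t, ht⟩ := exists_eq_smul_of_wedge_eq_zero hx.ne_zero h
  hx.2 k t ht

theorem Renormalizable.coneForm_ne_zero (hx : Renormalizable l x) : coneForm l x ≠ 0 := by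
  intro h
  unfold coneForm at h
  rcases abs_choice (x 0 * x 1) with habs | habs <;> rw [habs] at h
  · refine hx.wedge_act_ne_zero 1 ?_
    rw [one_mul, inv_one, mul_one, wedge_act_gh_mul_gv_inv, h, mul_zero]
  · refine hx.wedge_act_ne_zero gv⁻¹ ?_
    rw [show gv⁻¹ * (gh * gv⁻¹) * gv⁻¹⁻¹ = gv⁻¹ * gh by group, wedge_act_gv_inv_mul_gh]
    linear_combination -l * h

theorem exists_eq_gen_zpow_of_mem_gens {a : F2} (ha : a ∈ gens) :
    ∃ (j : Fin 2) (e : ℤˣ), a = gen j ^ (e : ℤ) := by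
  rcases ha with rfl | rfl | rfl | rfl
  · exact ⟨0, 1, by simp [gen]⟩
  · exact ⟨1, 1, by simp [gen]⟩
  · exact ⟨0, -1, by simp [gen]⟩
  · exact ⟨1, -1, by simp [gen]⟩

theorem IsGeodesicRay.exists_isShearOrbit {g : ℕ → F2} (hg : IsGeodesicRay g) (hl : 0 ≤ l) :
    ∃ (c : ℕ → ℝ) (j : ℕ → Fin 2), (∀ n, |c n| = l) ∧
      (∀ n, j n = j (n + 1) → c n = c (n + 1)) ∧
      ∀ x, IsShearOrbit c j fun n => act l (g n) x := by
  obtain ⟨-, hstep, hback⟩ := hg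
  choose j e hje using fun n => exists_eq_gen_zpow_of_mem_gens (hstep n)
  have hsucc : ∀ n, g (n + 1) = gen (j n) ^ (e n : ℤ) * g n := fun n =>
    eq_mul_of_mul_inv_eq (hje n)
  have hsame : ∀ n, j n = j (n + 1) → e n = e (n + 1) := fun n hj => by
    by_contra hne
    apply hback n
    rw [hsucc (n + 1), hsucc n, ← hj, Int.units_ne_iff_eq_neg.1 hne]
    simp
  refine ⟨fun n => ((e n : ℤ) : ℝ) * l, j, fun n => ?_, fun n hj => ?_, fun x n => ?_⟩
  · rcases Int.units_eq_one_or (e n) with he | he <;> simp [he, abs_of_nonneg hl]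
  · simp only [hsame n hj]
  · simp only [hsucc n, act_mul, act_gen_zpow]

theorem mul_pos_of_mem_quad {s : SP} (hx : x ∈ Quad s) (hw : w ∈ Quad s) (i : Fin 2) :
    0 < x i * w i := by
  obtain ⟨hx0, hx1⟩ := hx
  obtain ⟨hw0, hw1⟩ := hw
  fin_cases i
  · cases hs : s.1 <;> simp only [hs, if_true, if_false, Bool.false_eq_true] at hx0 hw0
    · exact mul_pos_of_neg_of_neg hx0 hw0
    · exact mul_pos hx0 hw0
  · cases hs : s.2 <;> simp only [hs, if_true, if_false, Bool.false_eq_true] at hx1 hw1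
    · exact mul_pos_of_neg_of_neg hx1 hw1
    · exact mul_pos hx1 hw1

theorem sameQuadrant_of_mem_closure_quad {s : SP} (hx : x ∈ Quad s) (hw : w ∈ closure (Quad s)) :
    SameQuadrant x w := fun i => by
  have hclosed : IsClosed {y : Fin 2 → ℝ | 0 ≤ x i * y i} :=
    isClosed_le continuous_const (by fun_prop)
  exact ⟨left_ne_zero_of_mul (mul_pos_of_mem_quad hx hx i).ne',
    closure_minimal (fun y hy => (mul_pos_of_mem_quad hx hy i).le) hclosed hw⟩

end Action

theorem stmt10 (l : ℝ) (hl : 2 ≤ l) (x : Fin 2 → ℝ) (hx : x ∈ Circ)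
    (hren : Renormalizable l x)
    (g : ℕ → F2) (hg : IsGeodesicRay g) (hgs : IsShrinkingSeq l g x)
    (s : ℕ → SP) (hs : ∀ i, act l (g i) x ∈ Quad (s i))
    (w : Fin 2 → ℝ) (hw : w ∈ Circ)
    (hwq : ∀ i : ℕ, act l (g i) w ∈ closure (Quad (s i))) :
    w = x := by
  obtain ⟨c, j, hc, hred, horbit⟩ := hg.exists_isShearOrbit (zero_le_two.trans hl)
  have hquad : ∀ n, SameQuadrant (act l (g n) x) (act l (g n) w) := fun n =>
    sameQuadrant_of_mem_closure_quad (hs n) (hwq n)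
  have hwedge := (horbit x).wedge_eq_zero (horbit w) hl hc hred hquad hgs
    fun n => (hren.map_act (g n)).coneForm_ne_zero
  have hquad0 := hquad 0
  simp only [hg.1, act_one] at hquad0 hwedge
  exact eq_of_mem_circ_of_sameQuadrant hx hw hquad0 hwedge
end
end

section
/- Let 𝒢 be an infinite connected bipartite graph of bounded valance with bipartition 𝒱 = 𝒜 ⊔ ℬ. Let ⟨g_i⟩ be a geodesic ray in F₂, let s ∈ SP, and suppose the pair (g₁, s) belongs to {(h,++), (h,−−), (v,++), (v,−−), (h⁻¹,+−), (h⁻¹,−+), (v⁻¹,+−), (v⁻¹,−+)} (equivalently, ρ_λ(g₁)(Q_s) ⊆ Q_s for λ ≥ 2). Then for every i ≥ 0, Υ^{g_i}(Q̂_s) ⊆ Q̂_{s_i}, where s_i = Σ^{g_i}(s). -/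
noncomputable section

/-!
Write `|f|` for the nonnegative function obtained from `f ∈ QuadV A t` by removing the signs
prescribed by `t`. Applying a letter that moves the vertices of one class `S` of the bipartition
leaves `|f|` unchanged off `S`, and replaces it on `S` by `± |f| + adjSum |f|`, with the sign `+`
exactly when the letter fixes `t` under the sign action.

Positivity can only fail for the sign `-`, which occurs along a reduced word only when the previous
letter moved the other class. To control this case, choose a map `p` sending each vertex to a
neighbour such that `p (p v) ≠ v`; on an infinite, connected, locally finite graph, moving one step
towards a point at infinity is such a map. The quantity
`|f| v + |f| (p v) - adjSum |f| v` is then nonnegative at the vertices moved by the last letter: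
if it is nonnegative at `p v`, which has the distinct neighbours `v` and `p (p v)`, then
`|f| v ≤ |f| (p v)`, so that the new value `adjSum |f| v - |f| v` at `v` is at least
`adjSum |f| v - |f| (p v) ≥ 0`.
-/

section Nonbacktracking

/-- A choice of a neighbour `p v` of every vertex `v` whose iterates never turn straight back. -/
structure IsNonbacktracking {V : Type*} (G : SimpleGraph V) (p : V → V) : Prop where
  adj : ∀ v, G.Adj v (p v)
  apply_apply_ne : ∀ v, p (p v) ≠ v

variable {V : Type*} {G : SimpleGraph V}

lemma exists_adj_dist_add_one_eq (hconn : G.Connected) {v x : V} (hvx : v ≠ x) :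
    ∃ y, G.Adj v y ∧ G.dist y x + 1 = G.dist v x := by
  obtain ⟨walk, hwalk⟩ := hconn.exists_walk_length_eq_dist v x
  cases walk with
  | nil => exact absurd rfl hvx
  | @cons _ y _ hadj tail =>
    refine ⟨y, hadj, le_antisymm ?_ ?_⟩
    · rw [← hwalk, SimpleGraph.Walk.length_cons]
      exact Nat.succ_le_succ (SimpleGraph.dist_le tail)
    · calc G.dist v x ≤ G.dist v y + G.dist y x := hconn.dist_triangle
        _ = G.dist y x + 1 := by rw [SimpleGraph.dist_eq_one_iff_adj.2 hadj, add_comm]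

-- A nonprincipal ultrafilter on the vertices plays the role of a point at infinity.
lemma exists_isNonbacktracking [Infinite V] (hconn : G.Connected)
    (hfin : ∀ v, (G.neighborSet v).Finite) : ∃ p, IsNonbacktracking G p := by
  have closer (v : V) : ∃ y ∈ G.neighborSet v,
      ∀ᶠ x in Filter.hyperfilter V, G.dist y x + 1 = G.dist v x := by
    rw [← Ultrafilter.eventually_exists_mem_iff (hfin v)]
    filter_upwards [(Set.finite_singleton v).compl_mem_hyperfilter] with x hx
    exact exists_adj_dist_add_one_eq hconn (Ne.symm hx)
  choose p hadj hdist using closer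
  refine ⟨p, hadj, fun v hv => ?_⟩
  obtain ⟨x, h₁, h₂⟩ := ((hdist v).and (hdist (p v))).exists
  rw [hv] at h₂
  omega

end Nonbacktracking

section AdjSum

variable {V : Type} {G : SimpleGraph V} {φ ψ : V → ℝ} {v : V}

lemma adjSum_nonneg (hφ : ∀ y, 0 ≤ φ y) : 0 ≤ adjSum G φ v :=
  finsum_nonneg fun y => finsum_nonneg fun _ => hφ y

lemma adjSum_congr (h : ∀ y, G.Adj v y → φ y = ψ y) : adjSum G φ v = adjSum G ψ v :=
  finsum_mem_congr rfl h

lemma sum_le_adjSum (hfin : (G.neighborSet v).Finite) (hφ : ∀ y, 0 ≤ φ y) {s : Finset V}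
    (hs : ∀ y ∈ s, G.Adj v y) : ∑ y ∈ s, φ y ≤ adjSum G φ v := by
  rw [adjSum, finsum_mem_eq_finite_toFinset_sum _ hfin]
  exact Finset.sum_le_sum_of_subset_of_nonneg (fun y hy => hfin.mem_toFinset.2 (hs y hy))
    fun y _ _ => hφ y

lemma le_adjSum (hfin : (G.neighborSet v).Finite) (hφ : ∀ y, 0 ≤ φ y) {y : V}
    (hy : G.Adj v y) : φ y ≤ adjSum G φ v := by
  simpa using sum_le_adjSum (s := {y}) hfin hφ (by simpa using hy)

lemma add_le_adjSum (hfin : (G.neighborSet v).Finite) (hφ : ∀ y, 0 ≤ φ y) {x y : V}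
    (hx : G.Adj v x) (hy : G.Adj v y) (hxy : x ≠ y) : φ x + φ y ≤ adjSum G φ v := by
  classical
  simpa [Finset.sum_pair hxy] using
    sum_le_adjSum (s := {x, y}) hfin hφ (by simp [hx, hy])

end AdjSum

section Domination

variable {V : Type} {G : SimpleGraph V} {p : V → V}

/-- At every vertex of `S`, the value of `φ` dominates the sum of its values at all neighbours
other than the one chosen by `p`. The value at `p v` is moved to the right-hand side, so that the
full neighbour sum appears on the left. -/
def DominatesOn (G : SimpleGraph V) (p : V → V) (S : Set V) (φ : V → ℝ) : Prop :=
  ∀ v ∈ S, adjSum G φ v ≤ φ v + φ (p v)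

variable {S : Set V} {φ φ' : V → ℝ}

lemma nonneg_of_adjSum_le (hfin : ∀ v, (G.neighborSet v).Finite) (hp : IsNonbacktracking G p)
    (hφ : ∀ v, 0 ≤ φ v) (hoff : ∀ v ∉ S, φ' v = φ v)
    (hon : ∀ v ∈ S, adjSum G φ v ≤ φ' v + φ (p v)) (v : V) : 0 ≤ φ' v := by
  by_cases hv : v ∈ S
  · linarith [hon v hv, le_adjSum (hfin v) hφ (hp.adj v)]
  · exact (hφ v).trans_eq (hoff v hv).symm

lemma dominatesOn_of_adjSum_le (hp : IsNonbacktracking G p) (hbip : BipartWith G S)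
    (hoff : ∀ v ∉ S, φ' v = φ v) (hon : ∀ v ∈ S, adjSum G φ v ≤ φ' v + φ (p v)) :
    DominatesOn G p S φ' := by
  intro v hv
  have hnbr (y : V) (hy : G.Adj v y) : φ' y = φ y := hoff y ((hbip v y hy).1 hv)
  rw [adjSum_congr hnbr, hnbr (p v) (hp.adj v)]
  exact hon v hv

lemma DominatesOn.le_apply (hS : DominatesOn G p S φ) (hfin : ∀ v, (G.neighborSet v).Finite)
    (hp : IsNonbacktracking G p) (hφ : ∀ v, 0 ≤ φ v) {v : V} (hv : p v ∈ S) :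
    φ v ≤ φ (p v) := by
  have htwo : φ v + φ (p (p v)) ≤ adjSum G φ (p v) :=
    add_le_adjSum (hfin _) hφ (hp.adj v).symm (hp.adj (p v)) (hp.apply_apply_ne v).symm
  linarith [hS (p v) hv]

end Domination

section Letters

variable {w : Bool × Bool} {t : SP}

lemma letterSigma_eq_self_iff : letterSigma w t = t ↔ (t.1 == t.2) = w.2 := by
  revert w t; decide

lemma letterSigma_letterSigma : letterSigma w (letterSigma w t) = letterSigma w t := by
  revert w t; decide

lemma exists_mk_eq_of_mem_gens {x : F2} (hx : x ∈ gens) :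
    ∃ w : Bool × Bool, FreeGroup.mk [w] = x := by
  rcases hx with rfl | rfl | rfl | rfl
  exacts [⟨(true, true), rfl⟩, ⟨(false, true), rfl⟩, ⟨(true, false), rfl⟩, ⟨(false, false), rfl⟩]

lemma toWord_mk_singleton_mul {α : Type*} [DecidableEq α] {w : α × Bool} {x : FreeGroup α}
    (h : FreeGroup.IsReduced (w :: x.toWord)) :
    (FreeGroup.mk [w] * x).toWord = w :: x.toWord := by
  rw [FreeGroup.toWord_mul, FreeGroup.toWord_mk, FreeGroup.reduce_singleton,
    List.singleton_append, h.reduce_eq]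

lemma mk_singleton_mul_mk_singleton_of_eq_not {α : Type*} {w w' : α × Bool}
    (h₁ : w'.1 = w.1) (h₂ : w'.2 = !w.2) : FreeGroup.mk [w'] * FreeGroup.mk [w] = 1 := by
  obtain rfl : w' = (w.1, !w.2) := Prod.ext h₁ h₂
  exact inv_mul_cancel (FreeGroup.mk [w])

lemma sigmaAct_one (s : SP) : SigmaAct 1 s = s := by
  rw [SigmaAct, FreeGroup.toWord_one]
  rfl

lemma sigmaAct_eq_letterSigma {x y : F2} (h : x.toWord = w :: y.toWord) (s : SP) :
    SigmaAct x s = letterSigma w (SigmaAct y s) := by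
  rw [SigmaAct, h]
  rfl

end Letters

section GeodesicRay

/-- `w n` is the letter by which a ray `g` in `F2` passes from `g n` to `g (n + 1)`, and no letter
is followed by its inverse. -/
structure IsLetterSeq (w : ℕ → Bool × Bool) (g : ℕ → F2) : Prop where
  zero : g 0 = 1
  succ : ∀ n, g (n + 1) = FreeGroup.mk [w n] * g n
  reduced : ∀ n, (w (n + 1)).1 = (w n).1 → (w (n + 1)).2 = (w n).2

variable {g : ℕ → F2} {w : ℕ → Bool × Bool} {s : SP}

lemma IsGeodesicRay.exists_isLetterSeq (hg : IsGeodesicRay g) : ∃ w, IsLetterSeq w g := by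
  obtain ⟨hzero, hstep, hturn⟩ := hg
  choose w hw using fun n => exists_mk_eq_of_mem_gens (hstep n)
  have hsucc (n : ℕ) : g (n + 1) = FreeGroup.mk [w n] * g n := by rw [hw, inv_mul_cancel_right]
  refine ⟨w, hzero, hsucc, fun n hn => of_not_not fun hne => hturn n ?_⟩
  rw [hsucc (n + 1), hsucc n, ← mul_assoc, mul_inv_cancel_right]
  exact mk_singleton_mul_mk_singleton_of_eq_not hn (Bool.eq_not_of_ne hne)

lemma IsLetterSeq.toWord_succ (hw : IsLetterSeq w g) (n : ℕ) :
    (g (n + 1)).toWord = w n :: (g n).toWord := by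
  rw [hw.succ]
  apply toWord_mk_singleton_mul
  induction n with
  | zero => simp [hw.zero]
  | succ n ih =>
    rw [hw.succ, toWord_mk_singleton_mul ih]
    exact FreeGroup.isReduced_cons_cons.2 ⟨hw.reduced n, ih⟩

lemma IsLetterSeq.sigmaAct_succ (hw : IsLetterSeq w g) (n : ℕ) (s : SP) :
    SigmaAct (g (n + 1)) s = letterSigma (w n) (SigmaAct (g n) s) :=
  sigmaAct_eq_letterSigma (hw.toWord_succ n) s

lemma IsLetterSeq.letterSigma_zero_eq_self (hw : IsLetterSeq w g)
    (hpair : (g 1, s) ∈ ({(gh, (true, true)), (gh, (false, false)),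
      (gv, (true, true)), (gv, (false, false)),
      (gh⁻¹, (true, false)), (gh⁻¹, (false, true)),
      (gv⁻¹, (true, false)), (gv⁻¹, (false, true))} : Set (F2 × SP))) :
    letterSigma (w 0) s = s := by
  have hword : (g 1).toWord = [w 0] := by simpa [hw.zero] using hw.toWord_succ 0
  simp only [Set.mem_insert_iff, Set.mem_singleton_iff, Prod.mk.injEq] at hpair
  rcases hpair with ⟨h, rfl⟩ | ⟨h, rfl⟩ | ⟨h, rfl⟩ | ⟨h, rfl⟩ | ⟨h, rfl⟩ | ⟨h, rfl⟩ | ⟨h, rfl⟩ |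
    ⟨h, rfl⟩ <;>
  · rw [h] at hword
    rw [← List.singleton_inj.1 hword]
    rfl

end GeodesicRay

section Amplitude

/-- The real number `±1` encoded by a component of a sign pair or by the exponent of a letter. -/
def boolSign (b : Bool) : ℝ := if b then 1 else -1

variable {V : Type}

open Classical in
/-- The sign `±1` that the quadrant `QuadV A t` prescribes at the vertex `v`. -/
def quadSign (A : Set V) (t : SP) (v : V) : ℝ := if v ∈ A then boolSign t.1 else boolSign t.2

/-- The function `f` with the signs of the quadrant `QuadV A t` removed; it is the absolute value
of `f` when `f` lies in that quadrant. -/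
def amplitude (A : Set V) (t : SP) (f : V → ℝ) (v : V) : ℝ := quadSign A t v * f v

/-- The class of the bipartition on which the generator encoded by `b` (`gh` for `true`, `gv` for
`false`) and its inverse change the values of a function. -/
def movedSet (A : Set V) (b : Bool) : Set V := if b then A else Aᶜ

/-- The operator by which the letter `w` acts on functions: `Hop` or `Vop` with coefficient `±1`,
in a form uniform in the letter. -/
def letterOp (G : SimpleGraph V) (A : Set V) (w : Bool × Bool) (f : V → ℝ) (v : V) : ℝ :=
  f v + boolSign w.2 * Set.indicator (movedSet A w.1) (adjSum G f) v

variable {G : SimpleGraph V} {A : Set V} {w : Bool × Bool} {t : SP} {f : V → ℝ} {v y : V}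

lemma boolSign_mul_nonneg_iff {b : Bool} {r : ℝ} :
    0 ≤ boolSign b * r ↔ r = 0 ∨ (if b then 0 < r else r < 0) := by
  cases b <;> simp [boolSign, le_iff_eq_or_lt, eq_comm]

lemma mem_quadV_iff : f ∈ QuadV A t ↔ ∀ v, 0 ≤ amplitude A t f v := by
  have hquad (v : V) : 0 ≤ amplitude A t f v ↔
      (v ∈ A → 0 ≤ boolSign t.1 * f v) ∧ (v ∉ A → 0 ≤ boolSign t.2 * f v) := by
    by_cases hv : v ∈ A <;> simp [amplitude, quadSign, hv]
  simp only [hquad, forall_and, boolSign_mul_nonneg_iff]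
  rfl

lemma bipartWith_movedSet (hbip : BipartWith G A) (b : Bool) : BipartWith G (movedSet A b) := by
  intro v y hvy
  cases b
  · simpa [movedSet] using not_congr (hbip v y hvy)
  · exact hbip v y hvy

lemma movedSet_not (b : Bool) : movedSet A (!b) = (movedSet A b)ᶜ := by
  cases b <;> simp [movedSet]

lemma quadSign_letterSigma_of_notMem (hv : v ∉ movedSet A w.1) :
    quadSign A (letterSigma w t) v = quadSign A t v := by
  obtain ⟨b, e⟩ := w
  cases b <;> cases e <;> simp_all [movedSet, quadSign, letterSigma]

lemma quadSign_letterSigma_of_ne (hv : v ∈ movedSet A w.1) (h : letterSigma w t ≠ t) :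
    quadSign A (letterSigma w t) v = -quadSign A t v := by
  obtain ⟨⟨b, e⟩, t₁, t₂⟩ := w, t
  cases b <;> cases e <;> cases t₁ <;> cases t₂ <;>
    simp_all [movedSet, quadSign, letterSigma, boolSign]

lemma quadSign_letterSigma_of_adj (hbip : BipartWith G A) (hv : v ∈ movedSet A w.1)
    (hvy : G.Adj v y) : quadSign A (letterSigma w t) v * boolSign w.2 = quadSign A t y := by
  have hy := hbip v y hvy
  obtain ⟨⟨b, e⟩, t₁, t₂⟩ := w, t
  cases b <;> cases e <;> cases t₁ <;> cases t₂ <;>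
    simp_all [movedSet, quadSign, letterSigma, boolSign]

lemma amplitude_letterOp_of_notMem (hv : v ∉ movedSet A w.1) :
    amplitude A (letterSigma w t) (letterOp G A w f) v = amplitude A t f v := by
  simp [amplitude, letterOp, hv, quadSign_letterSigma_of_notMem]

lemma amplitude_letterOp_of_mem (hbip : BipartWith G A) (hv : v ∈ movedSet A w.1) :
    amplitude A (letterSigma w t) (letterOp G A w f) v =
      amplitude A (letterSigma w t) f v + adjSum G (amplitude A t f) v := by
  have hsum : quadSign A (letterSigma w t) v * boolSign w.2 * adjSum G f v =
      adjSum G (amplitude A t f) v := by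
    rw [adjSum, mul_finsum_mem]
    exact adjSum_congr fun y hy => by rw [quadSign_letterSigma_of_adj hbip hv hy, amplitude]
  rw [← hsum, amplitude, amplitude, letterOp, Set.indicator_of_mem hv]
  ring

end Amplitude

section Expanding

variable {V : Type} {G : SimpleGraph V} {A : Set V} {p : V → V} {w w' : Bool × Bool} {t : SP}
  {f : V → ℝ}

/-- The invariant carried along a reduced word: `f` lies in the quadrant of `t`, the last applied
letter `w` fixes `t`, and the amplitude of `f` dominates its neighbours on the class moved
by `w`. -/
structure IsExpanding_s14 (G : SimpleGraph V) (A : Set V) (p : V → V) (w : Bool × Bool) (t : SP)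
    (f : V → ℝ) : Prop where
  letterSigma_eq : letterSigma w t = t
  mem_quadV : f ∈ QuadV A t
  dominatesOn : DominatesOn G p (movedSet A w.1) (amplitude A t f)

lemma isExpanding_letterOp_of_le (hfin : ∀ v, (G.neighborSet v).Finite) (hbip : BipartWith G A)
    (hp : IsNonbacktracking G p) (hf : f ∈ QuadV A t)
    (hle : ∀ v ∈ movedSet A w.1,
      0 ≤ amplitude A (letterSigma w t) f v + amplitude A t f (p v)) :
    IsExpanding_s14 G A p w (letterSigma w t) (letterOp G A w f) := by
  have hoff (v : V) (hv : v ∉ movedSet A w.1) :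
      amplitude A (letterSigma w t) (letterOp G A w f) v = amplitude A t f v :=
    amplitude_letterOp_of_notMem hv
  have hon (v : V) (hv : v ∈ movedSet A w.1) : adjSum G (amplitude A t f) v ≤
      amplitude A (letterSigma w t) (letterOp G A w f) v + amplitude A t f (p v) := by
    rw [amplitude_letterOp_of_mem hbip hv]
    linarith [hle v hv]
  exact ⟨letterSigma_letterSigma,
    mem_quadV_iff.2 (nonneg_of_adjSum_le hfin hp (mem_quadV_iff.1 hf) hoff hon),
    dominatesOn_of_adjSum_le hp (bipartWith_movedSet hbip w.1) hoff hon⟩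

lemma isExpanding_letterOp_of_letterSigma_eq (hfin : ∀ v, (G.neighborSet v).Finite)
    (hbip : BipartWith G A) (hp : IsNonbacktracking G p) (hf : f ∈ QuadV A t)
    (hw : letterSigma w t = t) :
    IsExpanding_s14 G A p w (letterSigma w t) (letterOp G A w f) := by
  refine isExpanding_letterOp_of_le hfin hbip hp hf fun v _ => ?_
  rw [hw]
  exact add_nonneg (mem_quadV_iff.1 hf v) (mem_quadV_iff.1 hf (p v))

lemma IsExpanding_s14.letterOp_of_ne (hf : IsExpanding_s14 G A p w t f)
    (hfin : ∀ v, (G.neighborSet v).Finite) (hbip : BipartWith G A) (hp : IsNonbacktracking G p)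
    (hgen : w'.1 ≠ w.1) (hw' : letterSigma w' t ≠ t) :
    IsExpanding_s14 G A p w' (letterSigma w' t) (letterOp G A w' f) := by
  refine isExpanding_letterOp_of_le hfin hbip hp hf.mem_quadV fun v hv => ?_
  have hflip : amplitude A (letterSigma w' t) f v = -amplitude A t f v := by
    rw [amplitude, quadSign_letterSigma_of_ne hv hw', neg_mul, amplitude]
  have hpv : p v ∈ movedSet A w.1 := by
    rw [Bool.eq_not_of_ne hgen, movedSet_not] at hv
    exact of_not_not fun h => hv ((bipartWith_movedSet hbip w.1 v (p v) (hp.adj v)).2 h)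
  have hle : amplitude A t f v ≤ amplitude A t f (p v) :=
    hf.dominatesOn.le_apply hfin hp (mem_quadV_iff.1 hf.mem_quadV) hpv
  linarith

lemma IsExpanding_s14.letterOp (hf : IsExpanding_s14 G A p w t f)
    (hfin : ∀ v, (G.neighborSet v).Finite) (hbip : BipartWith G A) (hp : IsNonbacktracking G p)
    (hred : w'.1 = w.1 → w'.2 = w.2) :
    IsExpanding_s14 G A p w' (letterSigma w' t) (letterOp G A w' f) := by
  by_cases hw' : letterSigma w' t = t
  · exact isExpanding_letterOp_of_letterSigma_eq hfin hbip hp hf.mem_quadV hw'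
  · refine hf.letterOp_of_ne hfin hbip hp (fun hgen => hw' ?_) hw'
    rw [letterSigma_eq_self_iff, hred hgen, ← letterSigma_eq_self_iff]
    exact hf.letterSigma_eq

end Expanding

section Action

variable {V : Type} {G : SimpleGraph V} {A : Set V} {U : F2 →* Equiv.Perm (V → ℝ)}

lemma map_mk_singleton_eq_letterOp (hUh : ∀ k : ℤ, ∀ f : V → ℝ, U (gh ^ k) f = Hop G A k f)
    (hUv : ∀ k : ℤ, ∀ f : V → ℝ, U (gv ^ k) f = Vop G A k f) (w : Bool × Bool) (f : V → ℝ) :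
    U (FreeGroup.mk [w]) f = letterOp G A w f := by
  have hletter : FreeGroup.mk [w] = (if w.1 then gh else gv) ^ (if w.2 then 1 else -1 : ℤ) := by
    obtain ⟨_ | _, _ | _⟩ := w <;> rfl
  rw [hletter]
  obtain ⟨_ | _, _ | _⟩ := w <;> simp only [reduceIte, Bool.false_eq_true, hUh, hUv] <;> ext v <;>
    simp [Hop, Vop, letterOp, movedSet, boolSign]

lemma isExpanding_map_succ {p : V → V} {g : ℕ → F2} {w : ℕ → Bool × Bool} {s : SP} {f : V → ℝ}
    (hfin : ∀ v, (G.neighborSet v).Finite) (hbip : BipartWith G A) (hp : IsNonbacktracking G p)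
    (hU : ∀ (l : Bool × Bool) (f : V → ℝ), U (FreeGroup.mk [l]) f = letterOp G A l f)
    (hw : IsLetterSeq w g) (hs : letterSigma (w 0) s = s) (hf : f ∈ QuadV A s) (n : ℕ) :
    IsExpanding_s14 G A p (w n) (SigmaAct (g (n + 1)) s) (U (g (n + 1)) f) := by
  induction n with
  | zero =>
    rw [hw.sigmaAct_succ, hw.succ, hw.zero, sigmaAct_one, mul_one, hU]
    exact isExpanding_letterOp_of_letterSigma_eq hfin hbip hp hf hs
  | succ n ih =>
    rw [hw.sigmaAct_succ (n + 1), hw.succ (n + 1), map_mul, Equiv.Perm.mul_apply, hU]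
    exact ih.letterOp hfin hbip hp (hw.reduced n)

end Action

theorem stmt14_general {V : Type} {G : SimpleGraph V} {A : Set V} {p : V → V}
    (hfin : ∀ v, (G.neighborSet v).Finite) (hp : IsNonbacktracking G p) (hbip : BipartWith G A)
    (U : F2 →* Equiv.Perm (V → ℝ))
    (hUh : ∀ k : ℤ, ∀ f : V → ℝ, U (gh ^ k) f = Hop G A k f)
    (hUv : ∀ k : ℤ, ∀ f : V → ℝ, U (gv ^ k) f = Vop G A k f)
    (g : ℕ → F2) (hg : IsGeodesicRay g) (s : SP)
    (hpair : (g 1, s) ∈ ({(gh, (true, true)), (gh, (false, false)),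
      (gv, (true, true)), (gv, (false, false)),
      (gh⁻¹, (true, false)), (gh⁻¹, (false, true)),
      (gv⁻¹, (true, false)), (gv⁻¹, (false, true))} : Set (F2 × SP))) :
    ∀ i : ℕ, ∀ f ∈ QuadV A s, U (g i) f ∈ QuadV A (SigmaAct (g i) s) := by
  obtain ⟨w, hw⟩ := hg.exists_isLetterSeq
  have hs : letterSigma (w 0) s = s := hw.letterSigma_zero_eq_self hpair
  have hU := map_mk_singleton_eq_letterOp hUh hUv
  rintro (_ | n) f hf
  · rwa [hw.zero, map_one, sigmaAct_one]
  · exact (isExpanding_map_succ hfin hbip hp hU hw hs hf n).mem_quadV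

theorem stmt14 {V : Type} [Countable V] [Infinite V]
    (G : SimpleGraph V) (A : Set V)
    (hconn : G.Connected) (hval : BoundedValance G) (hbip : BipartWith G A)
    (U : F2 →* Equiv.Perm (V → ℝ))
    (hUh : ∀ k : ℤ, ∀ f : V → ℝ, U (gh ^ k) f = Hop G A k f)
    (hUv : ∀ k : ℤ, ∀ f : V → ℝ, U (gv ^ k) f = Vop G A k f)
    (g : ℕ → F2) (hg : IsGeodesicRay g) (s : SP)
    (hpair : (g 1, s) ∈ ({(gh, (true, true)), (gh, (false, false)),
      (gv, (true, true)), (gv, (false, false)),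
      (gh⁻¹, (true, false)), (gh⁻¹, (false, true)),
      (gv⁻¹, (true, false)), (gv⁻¹, (false, true))} : Set (F2 × SP))) :
    ∀ i : ℕ, ∀ f ∈ QuadV A s, U (g i) f ∈ QuadV A (SigmaAct (g i) s) := by
  obtain ⟨_, hD⟩ := hval
  obtain ⟨p, hp⟩ := exists_isNonbacktracking hconn fun v => (hD v).1
  exact stmt14_general (fun v => (hD v).1) hp hbip U hUh hUv g hg s hpair
end
end

section
/- Let 𝒢 be an infinite connected graph of bounded valance with vertex set 𝒱, and let f : 𝒱 → ℝ be non-negative. Then the following are equivalent: (1) there exists a non-negative g : 𝒱 → ℝ with A(g) = f; (2) for every finitely supported x : 𝒱 → ℝ such that A(x) is non-negative, one has ⟨f, x⟩ ≥ 0. -/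
noncomputable section

/-!
View `g` and `f` as linear functionals on finitely supported functions. By symmetry of the
adjacency relation, `A g = f` says that `f` is the composition of `g` with `x ↦ A x`, and
condition (2) says that `f` induces a nonnegative functional on the space of all `A x`. The M. Riesz
extension theorem extends it to a nonnegative functional on all finitely supported functions, which
is the required `g`. It applies because, if `v` is adjacent to `w`, every multiple of the indicator
of `w` is bounded by a multiple of `A` applied to the indicator of `v`. At an isolated vertex every
`A x` vanishes, so there the cone of the extension theorem carries no sign condition. Apart from
symmetry, this is a proof of Farkas' lemma for nonnegative matrices with finitely supported rows.
-/

open Finsupp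

section Riesz

variable {M E : Type*} [AddCommGroup M] [AddCommGroup E]

theorem exists_dual_comp_eq_of_ker_le_ker {K : Type*} [Field K] [Module K M] [Module K E]
    {L : M →ₗ[K] E} {f : M →ₗ[K] K} (hker : LinearMap.ker L ≤ LinearMap.ker f) :
    ∃ h : E →ₗ[K] K, h ∘ₗ L = f := by
  have hf : f ∈ LinearMap.range L.dualMap := by
    rw [LinearMap.range_dualMap_eq_dualAnnihilator_ker, Submodule.mem_dualAnnihilator]
    exact hker
  exact hf

theorem exists_nonneg_dual_comp_eq [Module ℝ M] [Module ℝ E] (s : PointedCone ℝ E)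
    (L : M →ₗ[ℝ] E) (f : M →ₗ[ℝ] ℝ)
    (nonneg : ∀ x, L x ∈ s → 0 ≤ f x) (dense : ∀ y, ∃ x, L x + y ∈ s) :
    ∃ g : E →ₗ[ℝ] ℝ, g ∘ₗ L = f ∧ ∀ y ∈ s, 0 ≤ g y := by
  have hker : LinearMap.ker L ≤ LinearMap.ker f := fun x (hx : L x = 0) ↦ by
    have hpos : 0 ≤ f x := nonneg x (hx ▸ s.zero_mem)
    have hneg : 0 ≤ f (-x) := nonneg (-x) (by simp [hx])
    rw [map_neg] at hneg
    exact le_antisymm (neg_nonneg.1 hneg) hpos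
  obtain ⟨h, rfl⟩ := exists_dual_comp_eq_of_ker_le_ker hker
  obtain ⟨g, hgh, hg⟩ := riesz_extension s (h.toPMap (LinearMap.range L))
    (by rintro ⟨_, x, rfl⟩; exact nonneg x)
    (fun y ↦ let ⟨x, hx⟩ := dense y; ⟨⟨L x, x, rfl⟩, hx⟩)
  exact ⟨g, LinearMap.ext fun x ↦ hgh ⟨L x, x, rfl⟩, hg⟩

end Riesz

section LinearCombination

variable {R W : Type*} [Semiring R]

theorem linearCombination_eq_finsum_mul (g : W → R) (y : W →₀ R) :
    linearCombination R g y = ∑ᶠ w, y w * g w := by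
  rw [finsum_eq_sum_of_support_subset (s := y.support)]
  · rfl
  · exact fun w hw ↦ Finsupp.mem_support_iff.2 (left_ne_zero_of_mul hw)

theorem linearCombination_nonneg [PartialOrder R] [IsOrderedRing R] {g : W → R}
    (hg : ∀ w, 0 ≤ g w) {y : W →₀ R} (hy : 0 ≤ y) : 0 ≤ linearCombination R g y :=
  Finset.sum_nonneg fun w _ ↦ mul_nonneg (hy w) (hg w)

end LinearCombination

section RowFiniteMatrix

variable {V W : Type*}

/-- The cone of finitely supported functions that are nonnegative at every point of `S`; their
values outside `S` are arbitrary. It is the cone to which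
the M. Riesz extension theorem is applied. -/
def nonnegOn (S : Set W) : PointedCone ℝ (W →₀ ℝ) where
  carrier := {y | ∀ w ∈ S, 0 ≤ y w}
  add_mem' hy hz w hw := add_nonneg (hy w hw) (hz w hw)
  zero_mem' _ _ := le_rfl
  smul_mem' c _ hy w hw := mul_nonneg c.2 (hy w hw)

/-- The indices of the nonzero columns of the matrix with rows `a v`: outside of them every linear
combination of the rows vanishes. -/
def columnSupport (a : V → W →₀ ℝ) : Set W :=
  {w | ∃ v, a v w ≠ 0}

theorem linearCombination_apply_eq_zero_of_notMem_columnSupport {a : V → W →₀ ℝ} {w : W}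
    (hw : w ∉ columnSupport a) (x : V →₀ ℝ) : linearCombination ℝ a x w = 0 := by
  have hzero : ∀ v, a v w = 0 := by simpa [columnSupport] using hw
  simp [linearCombination_apply, Finsupp.sum, hzero]

theorem linearCombination_mem_nonnegOn_columnSupport {a : V → W →₀ ℝ} {x : V →₀ ℝ} :
    linearCombination ℝ a x ∈ nonnegOn (columnSupport a) ↔ 0 ≤ linearCombination ℝ a x := by
  refine ⟨fun h w ↦ ?_, fun h w _ ↦ h w⟩
  by_cases hw : w ∈ columnSupport a
  · exact h w hw
  · exact (linearCombination_apply_eq_zero_of_notMem_columnSupport hw x).ge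

theorem exists_linearCombination_add_single_mem_nonnegOn {a : V → W →₀ ℝ} (ha : ∀ v, 0 ≤ a v)
    (w : W) (r : ℝ) :
    ∃ x : V →₀ ℝ, linearCombination ℝ a x + single w r ∈ nonnegOn (columnSupport a) := by
  by_cases hw : w ∈ columnSupport a
  · obtain ⟨v, hv⟩ := hw
    refine ⟨single v (|r| / a v w), fun u _ ↦ ?_⟩
    rw [linearCombination_single, Finsupp.add_apply, Finsupp.smul_apply, smul_eq_mul]
    obtain rfl | hne := eq_or_ne w u
    · rw [div_mul_cancel₀ _ hv, single_eq_same]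
      exact neg_le_iff_add_nonneg'.1 (neg_abs_le r)
    · rw [single_eq_of_ne hne.symm, add_zero]
      exact mul_nonneg (div_nonneg (abs_nonneg r) (ha v w)) (ha v u)
  · refine ⟨0, fun u hu ↦ ?_⟩
    have hne : u ≠ w := fun h ↦ hw (h ▸ hu)
    simp [hne]

theorem exists_linearCombination_add_mem_nonnegOn {a : V → W →₀ ℝ} (ha : ∀ v, 0 ≤ a v)
    (y : W →₀ ℝ) :
    ∃ x : V →₀ ℝ, linearCombination ℝ a x + y ∈ nonnegOn (columnSupport a) := by
  induction y using Finsupp.induction_linear with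
  | zero => exact ⟨0, by simp⟩
  | add y z hy hz =>
    obtain ⟨x, hx⟩ := hy
    obtain ⟨x', hx'⟩ := hz
    exact ⟨x + x', by simpa only [map_add, add_add_add_comm] using add_mem hx hx'⟩
  | single w r => exact exists_linearCombination_add_single_mem_nonnegOn ha w r

theorem exists_nonneg_linearCombination_eq_iff {a : V → W →₀ ℝ} (ha : ∀ v, 0 ≤ a v) (f : V → ℝ) :
    (∃ g : W → ℝ, (∀ w, 0 ≤ g w) ∧ ∀ v, linearCombination ℝ g (a v) = f v) ↔
      ∀ x : V →₀ ℝ, 0 ≤ linearCombination ℝ a x → 0 ≤ linearCombination ℝ f x := by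
  constructor
  · rintro ⟨g, hg, hgf⟩ x hx
    obtain rfl : (fun v ↦ linearCombination ℝ g (a v)) = f := funext hgf
    rw [← linearCombination_linearCombination]
    exact linearCombination_nonneg hg hx
  · intro hf
    obtain ⟨g, hgf, hg⟩ := exists_nonneg_dual_comp_eq (nonnegOn (columnSupport a))
      (linearCombination ℝ a) (linearCombination ℝ f)
      (fun x hx ↦ hf x (linearCombination_mem_nonnegOn_columnSupport.1 hx))
      (exists_linearCombination_add_mem_nonnegOn ha)
    refine ⟨fun w ↦ g (single w 1), fun w ↦ hg _ fun u _ ↦ single_nonneg.2 zero_le_one u,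
      fun v ↦ ?_⟩
    have hg_eq : linearCombination ℝ (fun w ↦ g (single w 1)) = g := by ext; simp
    simpa [hg_eq] using LinearMap.congr_fun hgf (single v 1)

end RowFiniteMatrix

section Adjacency

variable {V : Type} (G : SimpleGraph V) [G.LocallyFinite]

/-- The row of the adjacency matrix of `G` indexed by `v`, i.e. the indicator function of the
neighbors of `v`, as a finitely supported function. Linear combinations with these rows express
`adjSum`. -/
def adjRow (v : V) : V →₀ ℝ :=
  indicator (G.neighborFinset v) fun _ _ ↦ 1

theorem adjRow_nonneg (v : V) : 0 ≤ adjRow G v := by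
  classical
  intro w
  simp only [adjRow, indicator_apply, coe_zero, Pi.zero_apply]
  split_ifs <;> norm_num

theorem adjRow_comm (v w : V) : adjRow G v w = adjRow G w v := by
  classical
  simp [adjRow, indicator_apply, G.adj_comm]

theorem linearCombination_adjRow (g : V → ℝ) (v : V) :
    linearCombination ℝ g (adjRow G v) = adjSum G g v := by
  classical
  rw [linearCombination_eq_finsum_mul, adjSum]
  refine finsum_congr fun w ↦ ?_
  simp [adjRow, indicator_apply, finsum_eq_if]

theorem linearCombination_adjRow_apply (x : V →₀ ℝ) (w : V) :
    linearCombination ℝ (adjRow G) x w = adjSum G x w :=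
  calc linearCombination ℝ (adjRow G) x w
    _ = linearCombination ℝ (fun v ↦ adjRow G v w) x :=
      apply_linearCombination ℝ (lapply w) (adjRow G) x
    _ = ∑ᶠ v, x v * adjRow G v w := linearCombination_eq_finsum_mul _ x
    _ = ∑ᶠ v, adjRow G w v * x v := finsum_congr fun v ↦ by rw [adjRow_comm, mul_comm]
    _ = linearCombination ℝ x (adjRow G w) := (linearCombination_eq_finsum_mul x _).symm
    _ = adjSum G x w := linearCombination_adjRow G x w

theorem stmt15_general (f : V → ℝ) :
    (∃ g : V → ℝ, (∀ v, 0 ≤ g v) ∧ ∀ v, adjSum G g v = f v) ↔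
      ∀ x : V → ℝ, (Function.support x).Finite →
        (∀ v, 0 ≤ adjSum G x v) → 0 ≤ ∑ᶠ v, x v * f v := by
  have hfarkas := exists_nonneg_linearCombination_eq_iff (adjRow_nonneg G) f
  simp only [linearCombination_adjRow] at hfarkas
  simp only [hfarkas, Finsupp.le_def, linearCombination_adjRow_apply,
    linearCombination_eq_finsum_mul f, Finsupp.zero_apply]
  exact ⟨fun h x hx ↦ h (ofSupportFinite x hx), fun h x ↦ h x x.hasFiniteSupport⟩

end Adjacency

theorem stmt15 {V : Type} [Countable V] [Infinite V]
    (G : SimpleGraph V) (hconn : G.Connected) (hval : BoundedValance G)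
    (f : V → ℝ) (hf : ∀ v, 0 ≤ f v) :
    (∃ g : V → ℝ, (∀ v, 0 ≤ g v) ∧ ∀ v, adjSum G g v = f v) ↔
      ∀ x : V → ℝ, (Function.support x).Finite →
        (∀ v, 0 ≤ adjSum G x v) → 0 ≤ ∑ᶠ v, x v * f v := by
  obtain ⟨_, hD⟩ := hval
  have : G.LocallyFinite := fun v ↦ (hD v).1.fintype
  exact stmt15_general G f
end
end

section
/- Let 𝒢 be an infinite connected graph of bounded valance with vertex set 𝒱. Then the set {A(f) : f ∈ ℝ^𝒱, f non-negative} is a closed subset of ℝ^𝒱 in the product topology (the topology of pointwise convergence). -/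
noncomputable section

/-!
Write `A` for `adjSum G`. If `f ≥ 0` and `w` is a neighbour of `v`, then `f v ≤ A f w`, while the
value of `f` at an isolated vertex does not influence `A f` and may be taken to be `0`. So a
preimage of `g` can be sought in a product of compact intervals depending continuously on `g`. After
rescaling these intervals to `[-1, 1]`, the image of the nonnegative cone under `A` is the
projection of a closed set along a compact factor.
-/

section FunctionSpace

variable {ι : Type*}

theorem exists_mem_Icc_mul_eq_of_abs_le {x b : ι → ℝ} (hxb : ∀ i, |x i| ≤ b i) :
    ∃ t : ι → Set.Icc (-1 : ℝ) 1, (fun i => (t i : ℝ) * b i) = x := by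
  have hratio (i : ι) : x i / b i ∈ Set.Icc (-1 : ℝ) 1 := by
    have hb : 0 ≤ b i := (abs_nonneg _).trans (hxb i)
    rw [Set.mem_Icc, ← abs_le, abs_div, abs_of_nonneg hb]
    exact div_le_one_of_le₀ (hxb i) hb
  refine ⟨fun i => ⟨x i / b i, hratio i⟩, funext fun i => ?_⟩
  exact div_mul_cancel_of_imp fun hb => abs_nonpos_iff.mp (hb ▸ hxb i)

theorem isClosed_image_of_abs_le_comp {Y : Type*} [TopologicalSpace Y] [T2Space Y]
    {T : (ι → ℝ) → Y} (hT : Continuous T) {b : Y → ι → ℝ} (hb : Continuous b)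
    {S : Set (ι → ℝ)} (hS : IsClosed S) (hbound : ∀ x ∈ S, ∀ i, |x i| ≤ b (T x) i) :
    IsClosed (T '' S) := by
  let scale : (ι → Set.Icc (-1 : ℝ) 1) × Y → ι → ℝ := fun p i => p.1 i * b p.2 i
  have hscale : Continuous scale := by fun_prop
  have hclosed : IsClosed {p | scale p ∈ S ∧ T (scale p) = p.2} :=
    (hS.preimage hscale).inter (isClosed_eq (hT.comp hscale) continuous_snd)
  convert isClosedMap_snd_of_compactSpace _ hclosed using 1
  ext y
  constructor
  · rintro ⟨x, hx, rfl⟩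
    obtain ⟨t, ht⟩ := exists_mem_Icc_mul_eq_of_abs_le (hbound x hx)
    have hscale_eq : scale (t, T x) = x := ht
    exact ⟨(t, T x), ⟨hscale_eq.symm ▸ hx, congrArg T hscale_eq⟩, rfl⟩
  · rintro ⟨p, ⟨hpS, hpT⟩, rfl⟩
    exact ⟨scale p, hpS, hpT⟩

theorem isClosed_setOf_nonneg_and_eq_zero_of_notMem (s : Set ι) :
    IsClosed {f : ι → ℝ | 0 ≤ f ∧ ∀ i ∉ s, f i = 0} := by
  simp only [Set.ofPred_and, Set.ofPred_forall]
  exact isClosed_Ici.inter <| isClosed_iInter fun i => isClosed_iInter fun _ =>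
    isClosed_eq (continuous_apply i) continuous_const

end FunctionSpace

section AdjSum

variable {V : Type} (G : SimpleGraph V)

theorem adjSum_indicator_support (f : V → ℝ) :
    adjSum G (G.support.indicator f) = adjSum G f :=
  funext fun v => finsum_mem_congr rfl fun _ hw =>
    Set.indicator_of_mem (G.mem_support.mpr ⟨v, G.adj_symm hw⟩) f

theorem adjSum_nonneg_s16 {f : V → ℝ} (hf : 0 ≤ f) : 0 ≤ adjSum G f :=
  fun _ => finsum_nonneg fun w => finsum_nonneg fun _ => hf w

theorem image_adjSum_nonneg_eq_image_support_subset :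
    adjSum G '' {f | 0 ≤ f} = adjSum G '' {f | 0 ≤ f ∧ ∀ v ∉ G.support, f v = 0} := by
  refine subset_antisymm ?_ (Set.image_mono fun f hf => hf.1)
  rintro _ ⟨f, hf, rfl⟩
  exact ⟨G.support.indicator f,
    ⟨Set.indicator_nonneg fun v _ => hf v, fun _ hv => Set.indicator_of_notMem hv f⟩,
    adjSum_indicator_support G f⟩

variable [G.LocallyFinite]

theorem adjSum_eq_sum_neighborFinset (f : V → ℝ) (v : V) :
    adjSum G f v = ∑ w ∈ G.neighborFinset v, f w := by
  rw [adjSum, ← G.coe_neighborFinset, finsum_mem_coe_finset]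

theorem continuous_adjSum : Continuous (adjSum G) := by
  refine continuous_pi fun v => ?_
  simp only [adjSum_eq_sum_neighborFinset]
  fun_prop

variable {G}

theorem le_adjSum_of_adj {f : V → ℝ} (hf : 0 ≤ f) {v w : V} (h : G.Adj v w) :
    f w ≤ adjSum G f v := by
  rw [adjSum_eq_sum_neighborFinset]
  exact Finset.single_le_sum (fun u _ => hf u) ((G.mem_neighborFinset v w).mpr h)

variable (G)

theorem exists_forall_abs_le_adjSum :
    ∃ n : V → V, ∀ f ∈ {f : V → ℝ | 0 ≤ f ∧ ∀ v ∉ G.support, f v = 0},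
      ∀ v, |f v| ≤ adjSum G f (n v) := by
  have hneighbor (v : V) : ∃ w, v ∈ G.support → G.Adj v w := by
    by_cases hv : v ∈ G.support
    · exact (G.mem_support.mp hv).imp fun _ hw _ => hw
    · exact ⟨v, fun h => absurd h hv⟩
  choose n hn using hneighbor
  refine ⟨n, fun f ⟨hf, hsupp⟩ v => ?_⟩
  rw [abs_of_nonneg (hf v)]
  by_cases hv : v ∈ G.support
  · exact le_adjSum_of_adj hf (hn v hv).symm
  · exact (hsupp v hv).trans_le (adjSum_nonneg_s16 G hf (n v))

end AdjSum

theorem stmt16_general {V : Type} (G : SimpleGraph V) [G.LocallyFinite] :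
    IsClosed {g : V → ℝ | ∃ f : V → ℝ, (∀ v, 0 ≤ f v) ∧ (fun v => adjSum G f v) = g} := by
  change IsClosed (adjSum G '' {f | 0 ≤ f})
  rw [image_adjSum_nonneg_eq_image_support_subset]
  obtain ⟨n, hn⟩ := exists_forall_abs_le_adjSum G
  have hbound_continuous : Continuous fun (g : V → ℝ) v => g (n v) := by fun_prop
  exact isClosed_image_of_abs_le_comp (continuous_adjSum G) hbound_continuous
    (isClosed_setOf_nonneg_and_eq_zero_of_notMem G.support) hn

theorem stmt16 {V : Type} [Countable V] [Infinite V]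
    (G : SimpleGraph V) (hconn : G.Connected) (hval : BoundedValance G) :
    IsClosed {g : V → ℝ | ∃ f : V → ℝ, (∀ v, 0 ≤ f v) ∧ (fun v => adjSum G f v) = g} := by
  have : G.LocallyFinite := fun v => (hval.choose_spec v).1.fintype
  exact stmt16_general G
end
end
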